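/- Let n, p, k be positive integers with k ≤ n. Let S⁻ ⊆ {k+1,…,n} and S⁺ ⊆ {1,…,k} be finite sets satisfying: (i) |S⁻| = |S⁺| ≤ p/2, (ii) S⁻ ⊆ {k+1,…,k+p−1} and S⁺ ⊆ {k−p+2,…,k}, and (iii) if both are nonempty then max S⁻ − min S⁺ < p. Then there exists a permutation σ of {1,…,n} satisfying the Balas–Simonetti condition with parameter p (i + p ≤ j implies σ(i) < σ(j)) such that σ(i) = i for all i ∉ S⁻ ∪ S⁺ and σ restricts to a bijection from S⁻ onto S⁺. -/

import Mathlib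

/-- Sufficiency of the structural conditions on an encoded meta state
(S⁻, S⁺): there is a Balas–Simonetti permutation with parameter p fixing
everything outside S⁻ ∪ S⁺ and mapping S⁻ bijectively onto S⁺. -/
theorem stmt_5 (n p k : ℕ) (hn : 1 ≤ n) (hp : 1 ≤ p) (hk : 1 ≤ k) (hkn : k ≤ n)
    (Sm Sp : Finset ℕ)
    (hSm : Sm ⊆ Finset.Icc (k + 1) n) (hSp : Sp ⊆ Finset.Icc 1 k)
    (hcard : Sm.card = Sp.card) (hhalf : 2 * Sm.card ≤ p)
    (hSm' : Sm ⊆ Finset.Icc (k + 1) (k + p - 1))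
    (hSp' : Sp ⊆ Finset.Icc (k - p + 2) k)
    (hdist : ∀ (h1 : Sm.Nonempty) (h2 : Sp.Nonempty),
      Sm.max' h1 - Sp.min' h2 < p) :
    ∃ σ : Equiv.Perm ℕ,
      (∀ i j : ℕ, i ∈ Finset.Icc 1 n → j ∈ Finset.Icc 1 n → i + p ≤ j →
        σ i < σ j) ∧
      (∀ i : ℕ, i ∉ Sm ∪ Sp → σ i = i) ∧
      Sm.image σ = Sp := by
  have hm : ∀ a ∈ Sm, k < a := fun a ha => by
    have := Finset.mem_Icc.1 (hSm ha); omega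
  have hpp : ∀ a ∈ Sp, a ≤ k := fun a ha => (Finset.mem_Icc.1 (hSp ha)).2
  have hd : ∀ a ∈ Sm, ∀ b ∈ Sp, a < b + p := by
    intro a ha b hb
    have h := hdist ⟨a, ha⟩ ⟨b, hb⟩
    have h1 := Finset.le_max' Sm a ha
    have h2 := Finset.min'_le Sp b hb
    omega
  have hdis : ∀ a ∈ Sp, a ∉ Sm := fun a ha hb => by
    have := hm a hb
    have := hpp a ha
    omega
  let e : Sm ≃ Sp := Finset.equivOfCardEq hcard
  let f : ℕ → ℕ := fun x => if h : x ∈ Sm then (e ⟨x, h⟩ : ℕ) else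
    if h : x ∈ Sp then (e.symm ⟨x, h⟩ : ℕ) else x
  have f1 : ∀ x (h : x ∈ Sm), f x = e ⟨x, h⟩ := fun x h => by simp only [f, dif_pos h]
  have f2 : ∀ x (h : x ∈ Sp), f x = e.symm ⟨x, h⟩ := fun x h => by
    simp only [f, dif_neg (hdis x h), dif_pos h]
  have f3 : ∀ x, x ∉ Sm → x ∉ Sp → f x = x := fun x h h' => by
    simp only [f, dif_neg h, dif_neg h']
  have g1 : ∀ x ∈ Sm, f x ∈ Sp := fun x h => by rw [f1 x h]; exact (e ⟨x, h⟩).2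
  have g2 : ∀ x ∈ Sp, f x ∈ Sm := fun x h => by rw [f2 x h]; exact (e.symm ⟨x, h⟩).2
  have hinv : Function.Involutive f := by
    intro x
    by_cases h : x ∈ Sm
    · rw [f2 _ (g1 x h)]
      simp [f1 x h]
    · by_cases h' : x ∈ Sp
      · rw [f1 _ (g2 x h')]
        simp [f2 x h']
      · rw [f3 x h h', f3 x h h']
  have key : ∀ i, (i ∈ Sm ∧ f i ∈ Sp) ∨ (i ∈ Sp ∧ f i ∈ Sm) ∨ f i = i := by
    intro i
    by_cases h : i ∈ Sm
    · exact Or.inl ⟨h, g1 i h⟩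
    · by_cases h' : i ∈ Sp
      · exact Or.inr (Or.inl ⟨h', g2 i h'⟩)
      · exact Or.inr (Or.inr (f3 i h h'))
  refine ⟨hinv.toPerm f, ?_, ?_, ?_⟩
  · intro i j _ _ hij
    change f i < f j
    rcases key i with ⟨a, b⟩ | ⟨a, b⟩ | a <;> rcases key j with ⟨c, d⟩ | ⟨c, d⟩ | c
    · have := hm i a; have := hpp _ d; have := hd j c _ d; omega
    · have := hm i a; have := hpp _ c; omega
    · have := hm i a; have := hpp _ b; omega
    · have := hd j c i a; omega
    · have := hd _ b i a; have := hpp j c; have := hm _ b; omega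
    · have := hd _ b i a; omega
    · have := hd j c _ d; omega
    · have := hpp j c; have := hm _ d; omega
    · omega
  · intro i hi
    rw [Finset.mem_union, not_or] at hi
    exact f3 i hi.1 hi.2
  · ext y
    rw [Finset.mem_image]
    constructor
    · rintro ⟨x, hx, rfl⟩
      exact g1 x hx
    · intro hy
      exact ⟨f y, g2 y hy, hinv y⟩
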